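/- Let i > 0 and 0 ≤ k ≤ n−1. The following four sets have the same cardinality: (1) the set of pairs (α₀,ρ) where ρ is a word of k+1 distinct elements of [n] and α₀ is the complementary set, with des((α₀,ρ)) = i; (2) the set of permutations σ ∈ S_n with des(σ) = i whose special reverse wave srw(σ) has length at least n−k; (3) the set of permutations σ ∈ S_n with des(σ) = i whose special wave sw(σ) has length at least n−k; (4) the set of permutations σ ∈ S_n with lec(σ) = i whose rightmost hook has length at least n−k. -/

import Mathlib

/-!
All four sets are compared through the special reverse wave.

*Pairs and special reverse waves.* Split `σ` as `p * ρ` with `ρ` the word of the last `k + 1`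
letters, and let `x = ρ₁`. The special reverse wave has length at least `n - k` exactly when `p`
lists its letters below `x` increasingly and then its letters above `x` decreasingly
(`lt_length_srw_iff`). Hence `σ` is determined by `ρ`, every `ρ` occurs, and the letters above `x`
account for `#{a ∈ α₀ : a > ρ₁}` descents in front of `ρ` (`desPair_eq`).

*Exchanging waves.* Write a word as `w = lo * hi.reverse * x * u`, where `lo * hi.reverse * x` is
the special reverse wave, so that `B = lo * x * hi` is the sorted list of its letters. Then
`des w - des u` is `j = #hi + χ(x > u₁)`. If `w` has a descent then `0 < j < #B` (`srw_step`),
and, the letters of `w` being known, `w` can be recovered from `u` and `j` (`srw_inj`): if two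
waves with the same letters have the same `j` but `#hi` different, then `#hi` differs by one and
`u₁` lies between the two values of `x`, so that one of the waves could have been prolonged.

The same data `(u, B, j)` can be turned into

* a word with special wave of length `#B` and complement `u`, by inserting into `u` the wave with
  letters `B` and `j` descents; this adds exactly `j` descents (`exists_insert_wave`);
* a word ending with a hook of length `#B` that has `j` inversions, by appending to `u` the hook
  with first letter the `(j + 1)`-st smallest element of `B` (`hook_of_sorted`). To pass from `des`
  to `lec`, the prefix `u` is transformed recursively (`HookRel`), and injectivity follows from the
  uniqueness of the hook factorization (`isHookFact_unique`).

Both constructions give injective maps from `S_n` to itself, hence bijections, which match the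
relevant statistics (`card_eq_of_rearrange`).
-/

namespace Paper

/-- number of descents of a word -/
def des : List ℕ → ℕ
  | a :: b :: t => (if b < a then 1 else 0) + des (b :: t)
  | _ => 0

/-- number of inversions of a word -/
def inv : List ℕ → ℕ
  | [] => 0
  | a :: t => (t.countP fun x => decide (x < a)) + inv t

/-- a word is (strictly) increasing -/
def Incr (w : List ℕ) : Prop := w.Chain' (· < ·)

/-- a word is a hook: `a₁ > a₂` and `a₂ < a₃ < ⋯ < a_s`, length ≥ 2 -/
def IsHook : List ℕ → Prop
  | a :: b :: t => b < a ∧ (b :: t).Chain' (· < ·)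
  | _ => False

/-- `(γ, hs)` is the hook factorization data of `w` -/
def IsHookFact (w γ : List ℕ) (hs : List (List ℕ)) : Prop :=
  Incr γ ∧ (∀ h ∈ hs, IsHook h) ∧ w = γ ++ hs.flatten

/-- the statistic `lec` computed from the hooks of a factorization -/
def lecVal (hs : List (List ℕ)) : ℕ := (hs.map inv).sum

/-- one-line word of `σ ∈ S_n`, with entries in `[1..n]` -/
def word {n : ℕ} (σ : Equiv.Perm (Fin n)) : List ℕ :=
  List.ofFn fun i => (σ i : ℕ) + 1

/-- a word `w₁ ⋯ w_ℓ` with maximum in position `c` is a (nontrivial) reverse wave if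
`c ≠ ℓ` and `w₁ < ⋯ < w_{c-1} < w_ℓ < w_{ℓ-1} < ⋯ < w_c`. -/
def IsRevWave (w : List ℕ) : Prop :=
  ∃ c, c + 1 < w.length ∧ (w.take c ++ (w.drop c).reverse).Chain' (· < ·)

/-- a word `w₁ ⋯ w_ℓ` with maximum in position `c` is a (nontrivial) wave if
`c ≠ ℓ` and `w_ℓ < w_{ℓ-1} < ⋯ < w_{c+1} < w₁ < ⋯ < w_c`. -/
def IsWave (w : List ℕ) : Prop :=
  ∃ c, c + 1 < w.length ∧ ((w.drop (c + 1)).reverse ++ w.take (c + 1)).Chain' (· < ·)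

/-- the maximal strictly decreasing run starting below `hi` and staying above `lo` -/
def decRun (hi lo : ℕ) : List ℕ → List ℕ
  | [] => []
  | b :: t => if b < hi ∧ lo < b then b :: decRun b lo t else []

def srwAux (lo : ℕ) : List ℕ → List ℕ
  | [] => []
  | [a] => [a]
  | a :: b :: t => if a < b then a :: srwAux a (b :: t) else a :: decRun a lo (b :: t)

/-- the special reverse wave of a word: the prefix `w₁ ⋯ w_s` where `t` is the position of the
first descent (the whole word if none) and `s ≥ t` is maximal with
`w_t > w_{t+1} > ⋯ > w_s > w_{t-1}` (convention `w₀ = 0`). -/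
def srw (w : List ℕ) : List ℕ := srwAux 0 w

/-- the number of special reverse descents: `des (srw w) + χ(w_s > w_{s+1})` -/
def srdes (w : List ℕ) : ℕ :=
  des (srw w) +
    match (srw w).getLast?, (w.drop (srw w).length).head? with
    | some x, some y => if y < x then 1 else 0
    | _, _ => 0

/-- the prefix `w₁ ⋯ w_t` of `w` ending at the position `t` of the first descent
(the whole word if there is no descent) -/
def incrPrefix : List ℕ → List ℕ
  | [] => []
  | [a] => [a]
  | a :: b :: t => if a < b then a :: incrPrefix (b :: t) else [a]

/-- the special wave `w_r ⋯ w_t ⋯ w_s` of a word -/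
def sw (w : List ℕ) : List ℕ :=
  let pre := incrPrefix w
  match w.drop pre.length with
  | [] => w
  | x :: rs =>
    let kept := pre.takeWhile fun u => decide (u < x)
    pre.drop kept.length ++ x :: decRun x (kept.getLastD 0) rs

/-- the word `w \ sw(w) = w₁ ⋯ w_{r-1} w_{s+1} ⋯ w_ℓ` obtained removing the special wave -/
def swCompl (w : List ℕ) : List ℕ :=
  let pre := incrPrefix w
  match w.drop pre.length with
  | [] => []
  | x :: rs =>
    let kept := pre.takeWhile fun u => decide (u < x)
    kept ++ rs.drop (decRun x (kept.getLastD 0) rs).length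

/-- insertion `ins(a,b) = a₁ ⋯ a_x b₁ ⋯ b_q a_{x+1} ⋯ a_p`, where `x` is maximal with
`a₁ < a₂ < ⋯ < a_x < b_q` -/
def ins (a b : List ℕ) : List ℕ :=
  let pfx := (incrPrefix a).takeWhile fun u => decide (u < b.getLastD 0)
  pfx ++ b ++ a.drop pfx.length

/-- the word `ρ = ρ₁ ⋯ ρ_m` (entries in `[1..n]`) associated to an injection `Fin m ↪ Fin n` -/
def rho {n m : ℕ} (f : Fin m ↪ Fin n) : List ℕ :=
  List.ofFn fun j => (f j : ℕ) + 1

/-- descent number of the pair `(α₀, ρ)`: `des ρ + #{a ∈ α₀ : a > ρ₁}`,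
where `α₀ = [n] \ {ρ₁, …, ρ_m}` -/
def desPair (n : ℕ) {m : ℕ} (f : Fin m ↪ Fin n) : ℕ :=
  des (rho f) + ((Finset.Icc 1 n).filter fun a => a ∉ rho f ∧ (rho f).headI < a).card

/-- descent number of the pair `(α₀, ρ)`, with `ρ` given as a list -/
def desPairL (n : ℕ) (ρ : List ℕ) : ℕ :=
  des ρ + ((Finset.Icc 1 n).filter fun a => a ∉ ρ ∧ ρ.headI < a).card

/-- the map `μ`, sending `ρ` (with complementary set `α₀ = {α₁ < ⋯ < α_{n-k-1}}`) to
`α₁ ⋯ α_{n-k-m-1} α_{n-k-1} α_{n-k-2} ⋯ α_{n-k-m} ρ₁ ⋯ ρ_{k+1}`,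
where `m = #{a ∈ α₀ : a > ρ₁}` -/
def mu (n : ℕ) (ρ : List ℕ) : List ℕ :=
  let A := ((Finset.Icc 1 n).filter fun a => a ∉ ρ).sort (· ≤ ·)
  let m := (A.filter fun a => decide (ρ.headI < a)).length
  (A.take (A.length - m) ++ (A.drop (A.length - m)).reverse) ++ ρ

end Paper

namespace Paper

/-! ### Descents of words -/

theorem des_append_cons (l : List ℕ) (a : ℕ) (m : List ℕ) :
    des (l ++ a :: m) = des (l ++ [a]) + des (a :: m) := by
  induction l with
  | nil => simp [des]
  | cons b t ih =>
    cases t with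
    | nil => simp [des]
    | cons c t =>
      simp only [List.cons_append, des] at ih ⊢
      omega

theorem des_sorted {l : List ℕ} (h : l.Pairwise (· < ·)) : des l = 0 := by
  induction l with
  | nil => simp [des]
  | cons a t ih =>
    cases t with
    | nil => simp [des]
    | cons b t =>
      rw [List.pairwise_cons] at h
      have := h.1 b (by simp)
      simp [des, ih h.2]
      omega

theorem des_desc {x : ℕ} {l : List ℕ} (h : (x :: l).Pairwise (· > ·)) :
    des (x :: l) = l.length := by
  induction l generalizing x with
  | nil => simp [des]
  | cons b t ih =>
    rw [List.pairwise_cons] at h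
    have := h.1 b (by simp)
    simp only [des, ih h.2, List.length_cons]
    rw [if_pos this]; omega

theorem des_shape {lo hi : List ℕ} {x : ℕ} (u : List ℕ)
    (h : (lo ++ x :: hi).Pairwise (· < ·)) :
    des (lo ++ hi.reverse ++ x :: u) = hi.length + des (x :: u) := by
  rcases List.eq_nil_or_concat hi with rfl | ⟨hi', m, rfl⟩
  · simp only [List.reverse_nil, List.append_nil, List.length_nil, Nat.zero_add]
    rw [des_append_cons, des_sorted h, Nat.zero_add]
  · have h1 : (lo ++ [m]).Pairwise (· < ·) := by
      refine h.sublist ?_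
      simp only [List.concat_eq_append]
      exact (List.append_sublist_append_left lo).2 (by simp)
    have h2 : (m :: (hi'.reverse ++ [x])).Pairwise (· > ·) := by
      have : (x :: (hi' ++ [m])).Pairwise (· < ·) :=
        h.sublist (by simp)
      have := List.pairwise_reverse.2 this
      simpa using this
    have e : lo ++ (hi'.concat m).reverse ++ x :: u = lo ++ m :: (hi'.reverse ++ x :: u) := by
      simp
    rw [e, des_append_cons, des_sorted h1,
      ← List.cons_append, des_append_cons, List.cons_append, des_desc h2]
    simp

/-! ### The special reverse wave -/

theorem decRun_spec (c lo : ℕ) (m : List ℕ) :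
    ∃ d u, m = d ++ u ∧ decRun c lo m = d ∧ (c :: d).Pairwise (· > ·) ∧ (∀ b ∈ d, lo < b) ∧
      ∀ z u', u = z :: u' → ¬ (z < d.getLastD c ∧ lo < z) := by
  induction m generalizing c with
  | nil => exact ⟨[], [], by simp [decRun]⟩
  | cons b t ih =>
    by_cases hb : b < c ∧ lo < b
    · obtain ⟨d, u, e, e', hd, hlo, hs⟩ := ih b
      refine ⟨b :: d, u, by simp [e], by simp [decRun, hb, e'], ?_, ?_, ?_⟩
      · refine List.pairwise_cons.2 ⟨?_, hd⟩
        intro y hy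
        rcases List.mem_cons.1 hy with rfl | hy
        · exact hb.1
        · exact lt_trans ((List.pairwise_cons.1 hd).1 y hy) hb.1
      · simp [hb.2]; exact hlo
      · intro z u' hz
        simpa only [List.getLastD_cons] using hs z u' hz
    · refine ⟨[], b :: t, by simp, by simp [decRun, hb], by simp, by simp, ?_⟩
      rintro z u' ⟨⟩
      simpa using hb

theorem srwAux_spec (l0 : ℕ) (w : List ℕ) (hw : w ≠ []) (hnd : w.Nodup)
    (h0 : ∀ a ∈ w.head?, l0 < a) :
    ∃ lo hi x u, w = lo ++ hi.reverse ++ x :: u ∧ srwAux l0 w = lo ++ hi.reverse ++ [x] ∧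
      (l0 :: (lo ++ x :: hi)).Pairwise (· < ·) ∧
      ∀ z u', u = z :: u' → ¬ (z < x ∧ lo.getLastD l0 < z) ∧ (x < z → hi ≠ []) := by
  induction w generalizing l0 with
  | nil => exact absurd rfl hw
  | cons a t ih =>
    replace h0 : l0 < a := by simpa using h0
    cases t with
    | nil => exact ⟨[], [], a, [], by simp [srwAux, h0]⟩
    | cons b t =>
      by_cases hab : a < b
      · obtain ⟨lo, hi, x, u, e, e', hp, hs⟩ :=
          ih a (by simp) (List.nodup_cons.1 hnd).2 (by simpa using hab)
        refine ⟨a :: lo, hi, x, u, by simp [e], by simp [srwAux, hab, e'], ?_, ?_⟩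
        · rw [List.cons_append, List.pairwise_cons]
          refine ⟨?_, hp⟩
          intro y hy
          rcases List.mem_cons.1 hy with rfl | hy
          · exact h0
          · exact lt_trans h0 ((List.pairwise_cons.1 hp).1 y hy)
        · intro z u' hz
          simpa only [List.getLastD_cons] using hs z u' hz
      · have hba : b < a := by
          have : a ≠ b := by
            rintro rfl; simp at hnd
          omega
        obtain ⟨d, u, e, e', hd, hlo, hs⟩ := decRun_spec a l0 (b :: t)
        -- the decreasing run `a :: d`, read backwards, is `x :: hi`
        obtain ⟨hi, x, hx⟩ : ∃ hi x, (a :: d) = hi ++ [x] := by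
          rcases List.eq_nil_or_concat (a :: d) with h | ⟨p, q, h⟩
          · simp at h
          · exact ⟨p, q, by simpa using h⟩
        have hlast : d.getLastD a = x := by
          have := congrArg (fun l => l.getLastD 0) hx
          simpa only [List.getLastD_cons, List.getLastD_concat] using this
        refine ⟨[], hi.reverse, x, u, ?_, ?_, ?_, ?_⟩
        · rw [e, ← List.cons_append, hx]; simp
        · simp [srwAux, hab, e', hx]
        · have : (x :: hi.reverse) = (a :: d).reverse := by simp [hx]
          simp only [List.nil_append, this]
          refine List.pairwise_cons.2 ⟨?_, List.pairwise_reverse.2 hd⟩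
          intro y hy
          rcases List.mem_cons.1 (List.mem_reverse.1 hy) with rfl | hy
          · exact h0
          · exact hlo y hy
        · intro z u' hz
          rw [hlast] at hs
          refine ⟨by simpa using hs z u' hz, ?_⟩
          rintro hxz h
          have h : hi = [] := by simpa using h
          subst h
          simp at hx
          obtain ⟨rfl, rfl⟩ := hx
          simp [hz] at e
          omega

/-- A word in which the special reverse wave has been located: `lo` is the increasing part before
the position `t` of the first descent, `hi.reverse ++ [x]` is the decreasing part `w_t ⋯ w_s`, and
`u` is the rest of the word; the last clause says that the wave cannot be prolonged into `u`. -/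
def SrwDecomp (w lo hi : List ℕ) (x : ℕ) (u : List ℕ) : Prop :=
  w = lo ++ hi.reverse ++ x :: u ∧ srw w = lo ++ hi.reverse ++ [x] ∧
    (lo ++ x :: hi).Pairwise (· < ·) ∧
    ∀ z u', u = z :: u' → ¬ (z < x ∧ lo.getLastD 0 < z) ∧ (x < z → hi ≠ [])

theorem exists_srwDecomp {w : List ℕ} (hw : w ≠ []) (hnd : w.Nodup) (hpos : ∀ a ∈ w, 0 < a) :
    ∃ lo hi x u, SrwDecomp w lo hi x u := by
  obtain ⟨lo, hi, x, u, e, e', hp, hs⟩ := srwAux_spec 0 w hw hnd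
    (fun a ha => hpos a (List.mem_of_mem_head? ha))
  exact ⟨lo, hi, x, u, e, e', (List.pairwise_cons.1 hp).2, hs⟩

theorem SrwDecomp.drop {w lo hi : List ℕ} {x : ℕ} {u : List ℕ} (h : SrwDecomp w lo hi x u) :
    w.drop (srw w).length = u := by
  have : w = srw w ++ u := by rw [h.2.1]; simpa using h.1
  conv_lhs => arg 2; rw [this]
  simp

/-- Whether the junction from `x` to the first letter of `u` is a descent. -/
def junc (x : ℕ) : List ℕ → ℕ
  | [] => 0
  | z :: _ => if z < x then 1 else 0

theorem des_cons (x : ℕ) (u : List ℕ) : des (x :: u) = junc x u + des u := by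
  cases u <;> simp [des, junc]

theorem SrwDecomp.des {w lo hi : List ℕ} {x : ℕ} {u : List ℕ} (h : SrwDecomp w lo hi x u) :
    des w = hi.length + junc x u + Paper.des u := by
  rw [h.1, des_shape u h.2.2.1, des_cons, Nat.add_assoc]

theorem junc_le_one (x : ℕ) (u : List ℕ) : junc x u ≤ 1 := by
  cases u with
  | nil => simp [junc]
  | cons z u => simp only [junc]; split_ifs <;> omega

section SrwDecomp

variable {w w' lo lo' hi hi' : List ℕ} {x x' : ℕ} {u : List ℕ}

theorem SrwDecomp.junc_le (h : SrwDecomp w lo hi x u) (hpos : ∀ a ∈ w, 0 < a) :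
    junc x u ≤ lo.length := by
  cases lo with
  | cons a l => exact (junc_le_one x u).trans (by simp)
  | nil =>
    cases u with
    | nil => simp [junc]
    | cons z u =>
      have hz : 0 < z := hpos z (by simp [h.1])
      have := (h.2.2.2 z u rfl).1
      have : ¬ z < x := fun hzx => this ⟨hzx, hz⟩
      simp [junc, this]

theorem SrwDecomp.pos (h : SrwDecomp w lo hi x u) (hnd : w.Nodup) (hu : u ≠ []) :
    0 < hi.length + junc x u := by
  cases u with
  | nil => exact absurd rfl hu
  | cons z u =>
    by_cases hh : hi = []
    · have h1 : ¬ x < z := fun hxz => (h.2.2.2 z u rfl).2 hxz hh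
      have h2 : x ≠ z := by
        rintro rfl
        have := h.1 ▸ hnd
        simp [List.nodup_append] at this
      have : z < x := by omega
      simp [junc, this]
    · have := List.length_pos_iff.2 hh
      omega

theorem SrwDecomp.perm (h : SrwDecomp w lo hi x u) : w.Perm (lo ++ x :: hi ++ u) := by
  rw [h.1, List.append_assoc, List.append_assoc]
  refine List.Perm.append_left lo ?_
  refine List.perm_middle.trans ?_
  exact (List.Perm.append_right u (List.reverse_perm hi)).cons x

/-- If the words formed by the letters of the two waves agree, the decreasing parts cannot have
lengths differing by one: the first letter of `u` would lie between `x` and `x'`, so that it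
could be appended to the second wave. -/
theorem SrwDecomp.length_ne (h : SrwDecomp w lo hi x u) (h' : SrwDecomp w' lo' hi' x' u)
    (hnd : w.Nodup) (e : lo ++ x :: hi = lo' ++ x' :: hi')
    (hj : hi.length + junc x u = hi'.length + junc x' u) :
    hi.length ≠ hi'.length + 1 := by
  intro hl
  cases u with
  | nil => simp [junc] at hj; omega
  | cons z u =>
    have e' : lo ++ (x :: hi) = (lo' ++ [x']) ++ hi' := by simpa using e
    have hlen : lo' = lo ++ [x] := by
      have : (lo ++ [x]) ++ hi = lo' ++ (x' :: hi') := by simpa using e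
      exact (List.append_inj' this (by simp [hl])).1.symm
    simp only [junc] at hj
    split_ifs at hj with h1 h2 h2
    · omega
    · omega
    · have hne : x ≠ z := by
        rintro rfl
        have := h.1 ▸ hnd
        simp [List.nodup_append] at this
      refine (h'.2.2.2 z u rfl).1 ⟨h2, ?_⟩
      rw [hlen, List.getLastD_concat]
      omega
    · omega

/-- The rest of the word, together with the number of descents, determines the special reverse
wave among all arrangements of the same letters. -/
theorem SrwDecomp.inj (h : SrwDecomp w lo hi x u) (h' : SrwDecomp w' lo' hi' x' u)
    (hnd : w.Nodup) (hp : w.Perm w') (hd : Paper.des w = Paper.des w') : w = w' := by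
  have e : lo ++ x :: hi = lo' ++ x' :: hi' := by
    have : (lo ++ x :: hi ++ u).Perm (lo' ++ x' :: hi' ++ u) :=
      h.perm.symm.trans (hp.trans h'.perm)
    have := (List.perm_append_right_iff u).1 this
    exact this.eq_of_pairwise (fun a b _ _ h1 h2 => absurd h1 (by omega)) h.2.2.1 h'.2.2.1
  have hj : hi.length + junc x u = hi'.length + junc x' u := by
    rw [h.des, h'.des] at hd; omega
  have h1 := h.length_ne h' hnd e hj
  have h2 := h'.length_ne h (hp.nodup_iff.1 hnd) e.symm hj.symm
  have b1 := junc_le_one x u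
  have b2 := junc_le_one x' u
  obtain ⟨e1, e2⟩ := List.append_inj' e (by simp; omega)
  obtain ⟨rfl, rfl⟩ := List.cons.inj e2
  rw [h.1, h'.1, e1]

end SrwDecomp

theorem srw_inj {w w' : List ℕ} (hnd : w.Nodup) (hpos : ∀ a ∈ w, 0 < a) (hp : w.Perm w')
    (hu : w.drop (srw w).length = w'.drop (srw w').length) (hd : des w = des w') : w = w' := by
  by_cases hw : w = []
  · subst hw; exact hp.nil_eq
  have hw' : w' ≠ [] := by
    rintro rfl; exact hw hp.eq_nil
  obtain ⟨lo, hi, x, u, h⟩ := exists_srwDecomp hw hnd hpos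
  obtain ⟨lo', hi', x', u', h'⟩ := exists_srwDecomp hw' (hp.nodup_iff.1 hnd)
    (fun a ha => hpos a (hp.mem_iff.2 ha))
  rw [h.drop, h'.drop] at hu
  subst hu
  exact h.inj h' hnd hp hd

/-- Removing the special reverse wave from a word having descents lowers the
number of descents by the length `j` of a proper nonempty initial segment `B₁` of the sorted list
`B₁ ++ B₂` of the letters of the wave. -/
theorem srw_step {w : List ℕ} (hnd : w.Nodup) (hpos : ∀ a ∈ w, 0 < a) (hd : des w ≠ 0) :
    ∃ B₁ B₂ : List ℕ, B₁ ≠ [] ∧ B₂ ≠ [] ∧ (B₁ ++ B₂).Pairwise (· < ·) ∧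
      w.Perm (B₁ ++ B₂ ++ w.drop (srw w).length) ∧
      (srw w).length = (B₁ ++ B₂).length ∧
      des w = B₁.length + des (w.drop (srw w).length) := by
  have hw : w ≠ [] := by rintro rfl; simp [des] at hd
  obtain ⟨lo, hi, x, u, h⟩ := exists_srwDecomp hw hnd hpos
  have hj : 0 < hi.length + junc x u := by
    by_cases hu : u = []
    · have := h.des
      subst hu
      simp [des] at this
      omega
    · exact h.pos hnd hu
  have hj' := h.junc_le hpos
  rw [h.drop]
  refine ⟨(lo ++ x :: hi).take (hi.length + junc x u),
    (lo ++ x :: hi).drop (hi.length + junc x u), ?_, ?_, ?_, ?_, ?_, ?_⟩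
  · rw [← List.length_pos_iff]; simp; omega
  · rw [← List.length_pos_iff]; simp; omega
  · rw [List.take_append_drop]; exact h.2.2.1
  · rw [List.take_append_drop]; exact h.perm
  · rw [List.take_append_drop, h.2.1]; simp +arith
  · rw [h.des, List.length_take]; simp; omega

theorem srw_of_des_eq_zero {w : List ℕ} (hnd : w.Nodup) (hpos : ∀ a ∈ w, 0 < a)
    (hd : des w = 0) : srw w = w ∧ w.Pairwise (· < ·) := by
  by_cases hw : w = []
  · subst hw; simp [srw, srwAux]
  obtain ⟨lo, hi, x, u, h⟩ := exists_srwDecomp hw hnd hpos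
  have hu : u = [] := by
    by_contra hu
    have := h.pos hnd hu
    have := h.des
    omega
  have hh : hi = [] := by
    have := h.des
    rw [← List.length_eq_zero_iff]; omega
  subst hu hh
  obtain ⟨h1, h2, h3, -⟩ := h
  refine ⟨h2.trans h1.symm, ?_⟩
  rw [h1]; simpa using h3

/-! ### The special wave -/

theorem exists_incr_split (l0 b : ℕ) (u : List ℕ) :
    ∃ kept rest, u = kept ++ rest ∧ (l0 :: kept).Pairwise (· < ·) ∧ (∀ a ∈ kept, a < b) ∧
      ∀ z r, rest = z :: r → ¬ (z < b ∧ kept.getLastD l0 < z) := by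
  induction u generalizing l0 with
  | nil => exact ⟨[], [], by simp⟩
  | cons y t ih =>
    by_cases hy : y < b ∧ l0 < y
    · obtain ⟨kept, rest, e, hp, hb, hs⟩ := ih y
      refine ⟨y :: kept, rest, by simp [e], ?_, by simpa [hy.1] using hb, ?_⟩
      · refine List.pairwise_cons.2 ⟨?_, hp⟩
        intro a ha
        rcases List.mem_cons.1 ha with rfl | ha
        · exact hy.2
        · exact hy.2.trans ((List.pairwise_cons.1 hp).1 a ha)
      · simpa only [List.getLastD_cons] using hs
    · refine ⟨[], y :: t, by simp, by simp, by simp, ?_⟩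
      rintro z r ⟨⟩
      simpa using hy

theorem incrPrefix_eq {p : List ℕ} {m x : ℕ} (rs : List ℕ) (hp : (p ++ [m]).Pairwise (· < ·))
    (hx : x < m) : incrPrefix (p ++ m :: x :: rs) = p ++ [m] := by
  induction p with
  | nil =>
    have : ¬ m < x := by omega
    simp [incrPrefix, this]
  | cons a t ih =>
    have ih := ih (List.pairwise_cons.1 hp).2
    cases t with
    | nil =>
      have : a < m := by simpa using hp
      simp only [List.cons_append, List.nil_append] at ih ⊢
      simp [incrPrefix, this] at ih ⊢
      exact ih
    | cons b t =>
      have : a < b := (List.pairwise_cons.1 hp).1 b (by simp)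
      simp only [List.cons_append] at ih ⊢
      rw [incrPrefix, if_pos this, ih]

theorem decRun_eq {c lo : ℕ} {d : List ℕ} (rest : List ℕ) (hd : (c :: d).Pairwise (· > ·))
    (hlo : ∀ b ∈ d, lo < b)
    (hs : ∀ z r, rest = z :: r → ¬ (z < d.getLastD c ∧ lo < z)) :
    decRun c lo (d ++ rest) = d := by
  induction d generalizing c with
  | nil =>
    cases rest with
    | nil => simp [decRun]
    | cons z r =>
      have := hs z r rfl
      rw [List.getLastD_nil] at this
      simp [decRun, this]
  | cons b t ih =>
    have hcb := (List.pairwise_cons.1 hd).1 b (by simp)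
    have hb := hlo b (by simp)
    rw [List.cons_append, decRun, if_pos ⟨hcb, hb⟩,
      ih (List.pairwise_cons.1 hd).2 (fun y hy => hlo y (by simp [hy]))
        (by simpa only [List.getLastD_cons] using hs)]

theorem sw_eq {kept B p rest d : List ℕ} {m x : ℕ} (hp : kept ++ B = p ++ [m])
    (hs : (kept ++ B).Pairwise (· < ·)) (hx : x < m) (hk : ∀ a ∈ kept, a < x)
    (hB : ∀ a ∈ B, x < a) (hd : decRun x (kept.getLastD 0) (d ++ rest) = d) :
    sw (kept ++ B ++ x :: (d ++ rest)) = B ++ x :: d ∧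
      swCompl (kept ++ B ++ x :: (d ++ rest)) = kept ++ rest := by
  have h1 : incrPrefix (kept ++ B ++ x :: (d ++ rest)) = kept ++ B := by
    rw [hp] at hs ⊢
    simpa using incrPrefix_eq (d ++ rest) hs hx
  have h2 : (kept ++ B).takeWhile (fun u => decide (u < x)) = kept := by
    rw [List.takeWhile_append_of_pos (by simpa using hk)]
    cases B with
    | nil => simp
    | cons b B =>
      have : ¬ b < x := by have := hB b (by simp); omega
      simp [this]
  have h3 : (kept ++ B ++ x :: (d ++ rest)).drop (kept ++ B).length = x :: (d ++ rest) :=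
    List.drop_left
  constructor
  · simp only [sw, h1, h3, h2, hd]
    rw [List.drop_left]
  · simp only [swCompl, h1, h3, h2, hd]
    rw [List.drop_left]

/-- Inserting a wave into `u`: the wave with letters `B₁ ++ B₂` (sorted) and `#B₁` descents is
`B₂ ++ B₁.reverse`, and it goes behind the longest increasing prefix of `u` whose letters are below
the last letter of the wave. -/
theorem exists_insert_wave {u B₁ B₂ : List ℕ} (h₁ : B₁ ≠ []) (h₂ : B₂ ≠ [])
    (hB : (B₁ ++ B₂).Pairwise (· < ·)) (hnd : u.Nodup) (hpos : ∀ a ∈ u, 0 < a)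
    (hpos' : ∀ a ∈ B₁, 0 < a) :
    ∃ w, w.Perm (B₁ ++ B₂ ++ u) ∧ (sw w).length = (B₁ ++ B₂).length ∧ swCompl w = u ∧
      des w = B₁.length + des u := by
  obtain ⟨b, B₁', rfl⟩ := List.exists_cons_of_ne_nil h₁
  obtain ⟨B₂', m, rfl⟩ : ∃ B m, B₂ = B ++ [m] := by
    rcases List.eq_nil_or_concat B₂ with h | ⟨p, q, h⟩
    · exact absurd h h₂
    · exact ⟨p, q, by simpa using h⟩
  obtain ⟨kept, rest, rfl, hk, hkb, hs⟩ := exists_incr_split 0 b u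
  obtain ⟨x, d, hxd⟩ : ∃ x d, (b :: B₁').reverse = x :: d :=
    List.exists_cons_of_ne_nil (by simp)
  obtain ⟨hB1, hB2, hB12⟩ := List.pairwise_append.1 hB
  have hxmem : x ∈ b :: B₁' := by
    rw [← List.mem_reverse, hxd]; simp
  have hdmem : ∀ y ∈ d, y ∈ b :: B₁' := fun y hy => by
    rw [← List.mem_reverse, hxd]; simp [hy]
  have hble : ∀ y ∈ b :: B₁', b ≤ y := by
    intro y hy
    rcases List.mem_cons.1 hy with rfl | hy
    · exact le_rfl
    · exact ((List.pairwise_cons.1 hB1).1 y hy).le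
  have hlast : d.getLastD x = b := by
    have := congrArg (fun l => l.getLastD 0) hxd
    simpa only [List.getLastD_cons, List.reverse_cons, List.getLastD_concat] using this.symm
  have hkl : kept.getLastD 0 < b := by
    rcases List.eq_nil_or_concat kept with rfl | ⟨p, q, rfl⟩
    · exact hpos' b (by simp)
    · rw [List.concat_eq_append, List.getLastD_concat]
      exact hkb q (by simp)
  have hk' := (List.pairwise_cons.1 hk).2
  have hsort : (kept ++ (B₂' ++ [m])).Pairwise (· < ·) := by
    refine List.pairwise_append.2 ⟨hk', hB2, ?_⟩
    intro a ha c hc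
    exact (hkb a ha).trans (hB12 b (by simp) c hc)
  have hdec : (x :: d).Pairwise (· > ·) := by
    rw [← hxd]; exact List.pairwise_reverse.2 hB1
  have hrun : decRun x (kept.getLastD 0) (d ++ rest) = d := by
    refine decRun_eq rest hdec ?_ ?_
    · intro y hy
      exact lt_of_lt_of_le hkl (hble y (hdmem y hy))
    · rw [hlast]; exact hs
  obtain ⟨hsw, hswc⟩ := sw_eq (rest := rest) (d := d) (x := x)
    (List.append_assoc kept B₂' [m]).symm hsort (hB12 x hxmem m (by simp))
    (fun a ha => lt_of_lt_of_le (hkb a ha) (hble x hxmem)) (fun a ha => hB12 x hxmem a ha) hrun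
  refine ⟨_, ?_, ?_, hswc, ?_⟩
  · rw [← List.cons_append, ← hxd]
    rw [← Multiset.coe_eq_coe]
    simp only [← Multiset.coe_add, Multiset.coe_reverse]
    abel
  · rw [hsw, ← hxd]; simp; omega
  · rw [← List.cons_append, ← hxd]
    have e : kept ++ (B₂' ++ [m]) ++ ((b :: B₁').reverse ++ rest) =
        (kept ++ B₂') ++ m :: (B₁'.reverse ++ b :: rest) := by simp
    have hdec' : (m :: (B₁'.reverse ++ [b])).Pairwise (· > ·) := by
      have : (b :: B₁' ++ [m]).Pairwise (· < ·) :=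
        hB.sublist ((List.append_sublist_append_left _).2 (by simp))
      simpa using List.pairwise_reverse.2 this
    rw [e, des_append_cons, des_sorted (by simpa using hsort), ← List.cons_append,
      des_append_cons, List.cons_append, des_desc hdec', des_cons]
    -- the junction behind the wave is a descent exactly when it is one in `kept ++ rest`
    have hj : junc b rest + des rest = des (kept ++ rest) := by
      cases rest with
      | nil => simp [junc, des_sorted hk', des]
      | cons z r =>
        have hz := hs z r rfl
        rcases List.eq_nil_or_concat kept with rfl | ⟨p, l, rfl⟩
        · have h0 : 0 < z := hpos z (by simp)
          have : ¬ z < b := fun h => hz ⟨h, h0⟩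
          simp [junc, this]
        · rw [List.concat_eq_append] at *
          rw [List.getLastD_concat] at hz
          have hl : l < b := hkb l (by simp)
          have hne : z ≠ l := by
            rintro rfl
            simp [List.nodup_append] at hnd
          rw [List.append_assoc, List.singleton_append, des_append_cons, des_sorted hk', des_cons l]
          have : z < b ↔ z < l := by
            constructor
            · intro h; by_contra hcon; exact hz ⟨h, by omega⟩
            · intro h; omega
          simp [junc, this]
    simp; omega

theorem sw_sorted {w : List ℕ} (h : w.Pairwise (· < ·)) : sw w = w ∧ swCompl w = [] := by
  have h1 : incrPrefix w = w := by
    induction w with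
    | nil => simp [incrPrefix]
    | cons a t ih =>
      cases t with
      | nil => simp [incrPrefix]
      | cons b t =>
        have := (List.pairwise_cons.1 h).1 b (by simp)
        rw [incrPrefix, if_pos this, ih (List.pairwise_cons.1 h).2]
  simp [sw, swCompl, h1]

/-- The special reverse wave can be traded for a special wave of the same length. -/
theorem exists_sw_of_srw {w : List ℕ} (hnd : w.Nodup) (hpos : ∀ a ∈ w, 0 < a) :
    ∃ w', w'.Perm w ∧ (sw w').length = (srw w).length ∧ swCompl w' = w.drop (srw w).length ∧
      des w' = des w := by
  by_cases hd : des w = 0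
  · obtain ⟨h1, h2⟩ := srw_of_des_eq_zero hnd hpos hd
    obtain ⟨h3, h4⟩ := sw_sorted h2
    exact ⟨w, List.Perm.refl w, by rw [h1, h3], by rw [h1, h4]; simp, rfl⟩
  · obtain ⟨B₁, B₂, h₁, h₂, hB, hp, hl, hdes⟩ := srw_step hnd hpos hd
    obtain ⟨w', a, b, c, e⟩ := exists_insert_wave (u := w.drop (srw w).length) h₁ h₂ hB
      (hnd.sublist (List.drop_sublist _ _)) (fun a ha => hpos a (List.mem_of_mem_drop ha))
      (fun a ha => hpos a (hp.mem_iff.2 (by simp [ha])))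
    exact ⟨w', a.trans hp.symm, by rw [b, hl], c, by rw [e, hdes]⟩

/-! ### Hooks -/

theorem incr_iff {w : List ℕ} : Incr w ↔ w.Pairwise (· < ·) :=
  List.isChain_iff_pairwise

theorem isHook_iff {a b : ℕ} {t : List ℕ} :
    IsHook (a :: b :: t) ↔ b < a ∧ (b :: t).Pairwise (· < ·) :=
  and_congr_right fun _ => List.isChain_iff_pairwise

theorem IsHook.exists_eq {h : List ℕ} (hh : IsHook h) :
    ∃ a b t, h = a :: b :: t ∧ b < a ∧ (b :: t).Pairwise (· < ·) := by
  match h, hh with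
  | a :: b :: t, hh => exact ⟨a, b, t, rfl, isHook_iff.1 hh⟩

theorem IsHook.not_pairwise {h p s : List ℕ} (hh : IsHook h)
    (hs : (p ++ h ++ s).Pairwise (· < ·)) : False := by
  obtain ⟨a, b, t, rfl, hba, -⟩ := hh.exists_eq
  have := (List.pairwise_append.1 (List.pairwise_append.1 hs).1).2.1
  have := (List.pairwise_cons.1 this).1 b (by simp)
  omega

theorem inv_sorted {l : List ℕ} (h : l.Pairwise (· < ·)) : inv l = 0 := by
  induction l with
  | nil => simp [inv]
  | cons a t ih =>
    have := List.pairwise_cons.1 h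
    simp only [inv, ih this.2, Nat.add_zero, List.countP_eq_zero, decide_eq_true_eq]
    intro b hb
    have := this.1 b hb
    omega

/-- The hook with sorted list of letters `B₁ ++ c :: B₂` and first letter `c` has `#B₁`
inversions. -/
theorem hook_of_sorted {B₁ B₂ : List ℕ} {c : ℕ} (h₁ : B₁ ≠ [])
    (hB : (B₁ ++ c :: B₂).Pairwise (· < ·)) :
    IsHook (c :: (B₁ ++ B₂)) ∧ inv (c :: (B₁ ++ B₂)) = B₁.length := by
  have hs : (B₁ ++ B₂).Pairwise (· < ·) :=
    hB.sublist ((List.append_sublist_append_left _).2 (by simp))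
  obtain ⟨-, hcB, hlt⟩ := List.pairwise_append.1 hB
  constructor
  · obtain ⟨b, B, rfl⟩ := List.exists_cons_of_ne_nil h₁
    exact isHook_iff.2 ⟨hlt b (by simp) c (by simp), hs⟩
  · rw [inv, inv_sorted hs, List.countP_append, List.countP_eq_length.2, List.countP_eq_zero.2]
    · simp
    · intro y hy
      have := (List.pairwise_cons.1 hcB).1 y hy
      simp; omega
    · intro y hy
      simpa using hlt y hy c (by simp)

/-- The last hook of a word starts at its last descent. -/
theorem hook_suffix_unique {p p' h h' : List ℕ} (hh : IsHook h) (hh' : IsHook h')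
    (e : p ++ h = p' ++ h') : p = p' ∧ h = h' := by
  have key : ∀ c h h' : List ℕ, IsHook h → IsHook h' → h = c ++ h' → c = [] := by
    intro c h h' hh hh' e
    cases c with
    | nil => rfl
    | cons y c =>
      obtain ⟨a, b, t, rfl, -, hs⟩ := hh.exists_eq
      simp only [List.cons_append, List.cons.injEq] at e
      rw [e.2] at hs
      exact (hh'.not_pairwise (s := []) (by simpa using hs)).elim
  rcases List.append_eq_append_iff.1 e with ⟨c, rfl, e2⟩ | ⟨c, rfl, e2⟩
  · have := key c h h' hh hh' e2
    subst this; simp_all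
  · have := key c h' h hh' hh e2
    subst this; simp_all

theorem isHookFact_unique {w γ γ' : List ℕ} {hs hs' : List (List ℕ)} (h : IsHookFact w γ hs)
    (h' : IsHookFact w γ' hs') : γ = γ' ∧ hs = hs' := by
  have nil_of : ∀ {γ γ' : List ℕ} {l : List (List ℕ)} {w}, IsHookFact w γ [] →
      IsHookFact w γ' l → l = [] := by
    intro γ γ' l w h h'
    rcases List.eq_nil_or_concat l with rfl | ⟨l, a, rfl⟩
    · rfl
    · exfalso
      have ha : IsHook a := h'.2.1 a (by simp)
      have hw : w.Pairwise (· < ·) := by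
        have := h.2.2
        simp at this
        rw [this]; exact incr_iff.1 h.1
      refine ha.not_pairwise (p := γ' ++ l.flatten) (s := []) ?_
      rw [h'.2.2] at hw
      simpa using hw
  induction hs using List.reverseRecOn generalizing w hs' with
  | nil =>
    have := nil_of h h'
    subst this
    exact ⟨by simpa using h.2.2.symm.trans h'.2.2, rfl⟩
  | append_singleton l a ih =>
    rcases List.eq_nil_or_concat hs' with rfl | ⟨l', a', rfl⟩
    · exact absurd (nil_of h' h) (by simp)
    · rw [List.concat_eq_append] at h' ⊢
      have e : (γ ++ l.flatten) ++ a = (γ' ++ l'.flatten) ++ a' := by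
        have := h.2.2.symm.trans h'.2.2
        simpa using this
      obtain ⟨e1, rfl⟩ := hook_suffix_unique (h.2.1 a (by simp)) (h'.2.1 a' (by simp)) e
      obtain ⟨rfl, rfl⟩ := ih (w := γ ++ l.flatten)
        ⟨h.1, fun y hy => h.2.1 y (by simp [hy]), rfl⟩
        ⟨h'.1, fun y hy => h'.2.1 y (by simp [hy]), e1⟩
      exact ⟨rfl, rfl⟩

/-- The recursive correspondence exchanging special reverse waves with hooks. A word without
descents corresponds to itself; otherwise the special reverse wave is removed, and to the word
corresponding to what is left one appends the hook having the letters of the wave and as many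
inversions as descents have been lost. -/
inductive HookRel : List ℕ → List ℕ → Prop
  | base {w : List ℕ} : des w = 0 → HookRel w w
  | step {w v h : List ℕ} : des w ≠ 0 → HookRel (w.drop (srw w).length) v → IsHook h →
      des w = inv h + des (w.drop (srw w).length) → h.length = (srw w).length →
      (v ++ h).Perm w → HookRel w (v ++ h)

theorem exists_hookRel {w : List ℕ} (hnd : w.Nodup) (hpos : ∀ a ∈ w, 0 < a) :
    ∃ w', HookRel w w' := by
  by_cases hd : des w = 0
  · exact ⟨w, .base hd⟩
  · obtain ⟨B₁, B₂, h₁, h₂, hB, hp, hl, hdes⟩ := srw_step hnd hpos hd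
    have hlt : (w.drop (srw w).length).length < w.length := by
      have := List.length_pos_iff.2 h₁
      have h1 := hp.length_eq
      simp only [List.length_append] at h1 hl
      omega
    obtain ⟨v, hv⟩ := exists_hookRel (w := w.drop (srw w).length)
      (hnd.sublist (List.drop_sublist _ _)) (fun a ha => hpos a (List.mem_of_mem_drop ha))
    have hvp : v.Perm (w.drop (srw w).length) := by
      cases hv with
      | base => exact .refl _
      | step _ _ _ _ _ h => exact h
    obtain ⟨c, B₂, rfl⟩ := List.exists_cons_of_ne_nil h₂
    obtain ⟨hh, hi⟩ := hook_of_sorted h₁ hB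
    refine ⟨_, .step hd hv hh (by rw [hi, hdes]) ?_ ?_⟩
    · rw [hl]; simp; omega
    · refine List.Perm.trans ?_ hp.symm
      refine List.perm_append_comm.trans (List.Perm.append ?_ hvp)
      exact List.perm_middle.symm
termination_by w.length
decreasing_by exact hlt

theorem HookRel.perm {w w' : List ℕ} (h : HookRel w w') : w'.Perm w := by
  cases h with
  | base => exact .refl _
  | step _ _ _ _ _ h => exact h

theorem HookRel.fact {w w' : List ℕ} (h : HookRel w w') (hnd : w.Nodup)
    (hpos : ∀ a ∈ w, 0 < a) :
    ∃ γ hs, IsHookFact w' γ hs ∧ lecVal hs = des w ∧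
      (hs.getLastD γ).length = (srw w).length := by
  induction h with
  | base hd =>
    obtain ⟨h1, h2⟩ := srw_of_des_eq_zero hnd hpos hd
    exact ⟨_, [], ⟨incr_iff.2 h2, by simp, by simp⟩, by simp [lecVal, hd], by simp [h1]⟩
  | @step w v h hd _ hh hdes hl hp ih =>
    obtain ⟨γ, hs, ⟨f1, f2, f3⟩, f4, -⟩ := ih (hnd.sublist (List.drop_sublist _ _))
      (fun a ha => hpos a (List.mem_of_mem_drop ha))
    refine ⟨γ, hs ++ [h], ⟨f1, ?_, by simp [f3]⟩, ?_, by simp [hl]⟩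
    · intro y hy
      rcases List.mem_append.1 hy with hy | hy
      · exact f2 y hy
      · rw [List.mem_singleton.1 hy]; exact hh
    · rw [hdes, ← f4]; simp [lecVal]; omega

theorem HookRel.inj {w₁ w₂ w' : List ℕ} (h₁ : HookRel w₁ w') (h₂ : HookRel w₂ w')
    (hnd : w₁.Nodup) (hpos : ∀ a ∈ w₁, 0 < a) : w₁ = w₂ := by
  have hperm : w₁.Perm w₂ := h₁.perm.symm.trans h₂.perm
  have hnd₂ := hperm.nodup_iff.1 hnd
  have hpos₂ : ∀ a ∈ w₂, 0 < a := fun a ha => hpos a (hperm.mem_iff.2 ha)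
  have hdes : des w₁ = des w₂ := by
    obtain ⟨γ, hs, f, e, -⟩ := h₁.fact hnd hpos
    obtain ⟨γ', hs', f', e', -⟩ := h₂.fact hnd₂ hpos₂
    obtain ⟨-, rfl⟩ := isHookFact_unique f f'
    rw [← e, ← e']
  induction h₁ generalizing w₂ with
  | base hd =>
    cases h₂ with
    | base => rfl
    | step hd' => omega
  | @step w v h hd hr hh hd1 hl hp ih =>
    generalize hx : v ++ h = x at h₂
    cases h₂ with
    | base => omega
    | @step _ v' h' hd' hr' hh' hd1' hl' hp' =>
      obtain ⟨rfl, rfl⟩ := hook_suffix_unique hh hh' hx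
      refine srw_inj hnd hpos hperm ?_ hdes
      have hq : (w.drop (srw w).length).Perm (w₂.drop (srw w₂).length) :=
        hr.perm.symm.trans hr'.perm
      exact ih hr' (hnd.sublist (List.drop_sublist _ _))
        (fun a ha => hpos a (List.mem_of_mem_drop ha)) hq
        (hnd₂.sublist (List.drop_sublist _ _))
        (fun a ha => hpos₂ a (List.mem_of_mem_drop ha)) (by omega)

/-! ### From words to permutations -/

theorem mem_word {n : ℕ} (σ : Equiv.Perm (Fin n)) (a : ℕ) :
    a ∈ word σ ↔ 1 ≤ a ∧ a ≤ n := by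
  simp only [word, List.mem_ofFn]
  constructor
  · rintro ⟨i, rfl⟩
    have := (σ i).2
    omega
  · rintro ⟨h1, h2⟩
    refine ⟨σ.symm ⟨a - 1, by omega⟩, ?_⟩
    simp; omega

theorem word_nodup {n : ℕ} (σ : Equiv.Perm (Fin n)) : (word σ).Nodup := by
  rw [word, List.nodup_ofFn]
  intro i j h
  exact σ.injective (Fin.ext (by simpa using h))

theorem word_pos {n : ℕ} (σ : Equiv.Perm (Fin n)) : ∀ a ∈ word σ, 0 < a :=
  fun a ha => ((mem_word σ a).1 ha).1

theorem length_word {n : ℕ} (σ : Equiv.Perm (Fin n)) : (word σ).length = n := by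
  simp [word]

theorem word_injective {n : ℕ} : Function.Injective (word (n := n)) := by
  intro σ τ h
  have := List.ofFn_injective h
  ext i
  simpa using congrFun this i

theorem word_perm {n : ℕ} (σ τ : Equiv.Perm (Fin n)) : (word σ).Perm (word τ) :=
  (List.perm_ext_iff_of_nodup (word_nodup σ) (word_nodup τ)).2 fun a => by
    rw [mem_word, mem_word]

theorem exists_word {n : ℕ} {w : List ℕ} (hnd : w.Nodup)
    (hw : ∀ a, a ∈ w ↔ 1 ≤ a ∧ a ≤ n) : ∃ σ : Equiv.Perm (Fin n), word σ = w := by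
  have hlen : w.length = n := by
    have hp : w.Perm (word (1 : Equiv.Perm (Fin n))) :=
      (List.perm_ext_iff_of_nodup hnd (word_nodup _)).2 fun a => by rw [mem_word, hw]
    rw [hp.length_eq, length_word]
  subst hlen
  have hg : ∀ i : Fin w.length, 1 ≤ w[i] ∧ w[i] ≤ w.length := fun i =>
    (hw _).1 (List.getElem_mem i.2)
  let g : Fin w.length → Fin w.length := fun i => ⟨w[i] - 1, by have := hg i; omega⟩
  have hgi : Function.Injective g := by
    intro i j h
    have h1 := hg i
    have h2 := hg j
    have : w[i] - 1 = w[j] - 1 := congrArg Fin.val h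
    have : w[i] = w[j] := by omega
    exact Fin.ext ((List.Nodup.getElem_inj_iff hnd).1 this)
  refine ⟨Equiv.ofBijective g (Finite.injective_iff_bijective.1 hgi), ?_⟩
  refine List.ext_getElem (by simp [word]) ?_
  intro i h1 h2
  have := hg ⟨i, h2⟩
  simp [word, g]
  simp at this
  omega

/-- An injective rearrangement of words carries the permutations with property `P` onto those
with property `Q` as soon as `P` at a word amounts to `Q` at its image. -/
theorem card_eq_of_rearrange {n : ℕ} (P Q : List ℕ → Prop)
    (R : List ℕ → List ℕ → Prop)
    (hR : ∀ w : List ℕ, w.Nodup → (∀ a ∈ w, 0 < a) → ∃ w', R w w')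
    (hperm : ∀ w w', R w w' → w'.Perm w)
    (hinj : ∀ w₁ w₂ w', R w₁ w' → R w₂ w' → w₁.Nodup → (∀ a ∈ w₁, 0 < a) → w₁ = w₂)
    (hPQ : ∀ w w', R w w' → w.Nodup → (∀ a ∈ w, 0 < a) → (P w ↔ Q w')) :
    Nat.card {σ : Equiv.Perm (Fin n) // P (word σ)} =
      Nat.card {σ : Equiv.Perm (Fin n) // Q (word σ)} := by
  have : ∀ σ : Equiv.Perm (Fin n), ∃ τ : Equiv.Perm (Fin n), R (word σ) (word τ) := by
    intro σ
    obtain ⟨w', h⟩ := hR (word σ) (word_nodup σ) (word_pos σ)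
    have hp := hperm _ _ h
    obtain ⟨τ, rfl⟩ := exists_word (n := n) (hp.nodup_iff.2 (word_nodup σ)) fun a => by
      rw [hp.mem_iff, mem_word]
    exact ⟨τ, h⟩
  choose F hF using this
  have hFi : Function.Injective F := fun σ τ h =>
    word_injective (hinj _ _ _ (hF σ) (h ▸ hF τ) (word_nodup σ) (word_pos σ))
  exact Nat.card_congr
    ((Equiv.ofBijective F (Finite.injective_iff_bijective.1 hFi)).subtypeEquiv fun σ =>
      hPQ _ _ (hF σ) (word_nodup σ) (word_pos σ))

theorem card_srw_eq_card_sw (n m i : ℕ) :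
    Nat.card {σ : Equiv.Perm (Fin n) // des (word σ) = i ∧ m ≤ (srw (word σ)).length} =
      Nat.card {σ : Equiv.Perm (Fin n) // des (word σ) = i ∧ m ≤ (sw (word σ)).length} := by
  refine card_eq_of_rearrange (fun w => des w = i ∧ m ≤ (srw w).length)
    (fun w => des w = i ∧ m ≤ (sw w).length)
    (fun w w' => w'.Perm w ∧ (sw w').length = (srw w).length ∧
      swCompl w' = w.drop (srw w).length ∧ des w' = des w)
    (fun w hnd hpos => exists_sw_of_srw hnd hpos) (fun w w' h => h.1) ?_ ?_
  · rintro w₁ w₂ w' ⟨a, -, c, d⟩ ⟨a', -, c', d'⟩ hnd hpos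
    exact srw_inj hnd hpos (a.symm.trans a') (c.symm.trans c') (d.symm.trans d')
  · rintro w w' ⟨-, b, -, d⟩ - -
    simp only [b, d]

theorem card_srw_eq_card_hook (n m i : ℕ) :
    Nat.card {σ : Equiv.Perm (Fin n) // des (word σ) = i ∧ m ≤ (srw (word σ)).length} =
      Nat.card {σ : Equiv.Perm (Fin n) // ∃ γ hs, IsHookFact (word σ) γ hs ∧ lecVal hs = i ∧
        m ≤ (hs.getLastD γ).length} := by
  refine card_eq_of_rearrange (fun w => des w = i ∧ m ≤ (srw w).length)
    (fun w => ∃ γ hs, IsHookFact w γ hs ∧ lecVal hs = i ∧ m ≤ (hs.getLastD γ).length)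
    HookRel (fun w hnd hpos => exists_hookRel hnd hpos) (fun w w' h => h.perm)
    (fun w₁ w₂ w' h₁ h₂ => h₁.inj h₂) ?_
  intro w w' h hnd hpos
  obtain ⟨γ, hs, f, e, l⟩ := h.fact hnd hpos
  constructor
  · rintro ⟨h1, h2⟩
    exact ⟨γ, hs, f, by omega, by omega⟩
  · rintro ⟨γ', hs', f', h1, h2⟩
    obtain ⟨rfl, rfl⟩ := isHookFact_unique f f'
    exact ⟨by omega, by omega⟩

/-! ### Pairs `(α₀, ρ)` -/

theorem le_length_decRun (c l0 : ℕ) (d : List ℕ) (u : List ℕ) (hd : (c :: d).Pairwise (· > ·))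
    (h0 : ∀ a ∈ d, l0 < a) : d.length ≤ (decRun c l0 (d ++ u)).length := by
  induction d generalizing c with
  | nil => simp
  | cons b t ih =>
    have h1 := (List.pairwise_cons.1 hd).1 b (by simp)
    have h2 := h0 b (by simp)
    rw [List.cons_append, decRun, if_pos ⟨h1, h2⟩]
    have := ih b (List.pairwise_cons.1 hd).2 (fun a ha => h0 a (by simp [ha]))
    simpa using this

theorem le_length_srwAux (l0 : ℕ) (lo hi u : List ℕ) (x : ℕ)
    (h : (l0 :: (lo ++ x :: hi)).Pairwise (· < ·)) :
    lo.length + hi.length + 1 ≤ (srwAux l0 (lo ++ hi.reverse ++ x :: u)).length := by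
  induction lo generalizing l0 with
  | nil =>
    rcases List.eq_nil_or_concat hi with rfl | ⟨hi, m, rfl⟩
    · cases u with
      | nil => simp [srwAux]
      | cons z u => simp [srwAux]; split_ifs <;> simp
    · have hd : (m :: (hi.reverse ++ [x])).Pairwise (· > ·) := by
        have := List.pairwise_reverse.2 (List.pairwise_cons.1 h).2
        simpa using this
      have h0 : ∀ a ∈ hi.reverse ++ [x], l0 < a := by
        intro a ha
        refine (List.pairwise_cons.1 h).1 a ?_
        simp at ha ⊢
        tauto
      have key := le_length_decRun m l0 _ u hd h0
      simp only [List.append_assoc, List.singleton_append, List.length_append,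
        List.length_reverse, List.length_singleton] at key
      have e : [] ++ (hi.concat m).reverse ++ x :: u = m :: (hi.reverse ++ x :: u) := by simp
      rw [e]
      obtain ⟨y, t, hy⟩ := List.exists_cons_of_ne_nil (l := hi.reverse ++ x :: u) (by simp)
      have hym : y < m := by
        have hy' : y ∈ hi.reverse ++ [x] := by
          cases hr : hi.reverse with
          | nil => rw [hr] at hy; simp at hy; simp [hy.1]
          | cons q s => rw [hr] at hy; simp at hy; simp [hy.1]
        exact (List.pairwise_cons.1 hd).1 y hy'
      rw [hy] at key ⊢
      have : ¬ m < y := by omega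
      simp only [srwAux, if_neg this, List.length_cons, List.length_nil, List.concat_eq_append,
        List.length_append]
      omega
  | cons a lo ih =>
    have ih := ih a (by simpa using (List.pairwise_cons.1 h).2)
    obtain ⟨y, t, hy⟩ := List.exists_cons_of_ne_nil (l := lo ++ hi.reverse ++ x :: u) (by simp)
    have hay : a < y := by
      have h1 := (List.pairwise_cons.1 (List.pairwise_cons.1 h).2).1
      refine h1 y ?_
      have : y ∈ lo ++ hi.reverse ++ [x] := by
        have e : lo ++ hi.reverse ++ x :: u = (lo ++ hi.reverse ++ [x]) ++ u := by simp
        rw [e] at hy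
        cases hr : lo ++ hi.reverse ++ [x] with
        | nil => simp at hr
        | cons q s => rw [hr] at hy; simp at hy; simp [hy.1]
      simp at this ⊢
      tauto
    rw [List.cons_append, List.cons_append]
    rw [hy] at ih ⊢
    simp only [srwAux, if_pos hay, List.length_cons]
    omega

/-- The special reverse wave reaches beyond the prefix `p` exactly when `p` consists of the
letters below the next letter `x`, increasingly, followed by those above `x`, decreasingly. -/
theorem lt_length_srw_iff {p u : List ℕ} {x : ℕ} (hnd : (p ++ x :: u).Nodup)
    (hpos : ∀ a ∈ p ++ x :: u, 0 < a) :
    p.length < (srw (p ++ x :: u)).length ↔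
      ∃ lo hi, p = lo ++ hi.reverse ∧ (lo ++ x :: hi).Pairwise (· < ·) := by
  constructor
  · intro h
    obtain ⟨lo, hi, y, v, e, e', hs, -⟩ := exists_srwDecomp (w := p ++ x :: u) (by simp) hnd hpos
    have hrev : (hi.reverse ++ [y]).Pairwise (· > ·) := by
      simpa using List.pairwise_reverse.2 (List.pairwise_append.1 hs).2.1
    -- `p ++ [x]` is a prefix of the wave
    obtain ⟨r, hr⟩ : ∃ r, lo ++ hi.reverse ++ [y] = p ++ x :: r := by
      have h1 : (p ++ [x]) <+: (p ++ x :: u) := ⟨u, by simp⟩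
      have h2 : (lo ++ hi.reverse ++ [y]) <+: (p ++ x :: u) := ⟨v, by rw [e]; simp⟩
      obtain ⟨r, hr⟩ := List.prefix_of_prefix_length_le h1 h2 (by
        rw [← e']; simpa using h)
      exact ⟨r, by simpa using hr.symm⟩
    have hlh := (List.pairwise_append.1 hs).2.2
    rw [List.append_assoc] at hr
    rcases List.append_eq_append_iff.1 hr with ⟨c, rfl, e2⟩ | ⟨c, rfl, e2⟩
    · refine ⟨lo, c.reverse, by simp, ?_⟩
      refine List.pairwise_append.2 ⟨(List.pairwise_append.1 hs).1, ?_, ?_⟩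
      · have : (c ++ [x]).Pairwise (· > ·) := by
          rw [e2] at hrev
          exact hrev.sublist ((List.append_sublist_append_left _).2 (by simp))
        simpa using List.pairwise_reverse.2 this
      · intro a ha b hb
        refine hlh a ha b ?_
        have : b ∈ hi.reverse ++ [y] := by
          rw [e2]; simp at hb ⊢; tauto
        simp at this ⊢; tauto
    · refine ⟨p, [], by simp, ?_⟩
      cases c with
      | nil =>
        refine List.pairwise_append.2 ⟨by simpa using (List.pairwise_append.1 hs).1, by simp, ?_⟩
        intro a ha b hb
        have hb : b = x := by simpa using hb
        subst hb
        refine hlh a (by simpa using ha) b ?_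
        have : b ∈ hi.reverse ++ [y] := by
          rw [List.nil_append] at e2; rw [← e2]; simp
        simp at this ⊢; tauto
      | cons q c =>
        have : q = x := by simp at e2; exact e2.1.symm
        subst this
        exact (List.pairwise_append.1 hs).1.sublist
          ((List.append_sublist_append_left _).2 (by simp))
  · rintro ⟨lo, hi, rfl, hs⟩
    have : ∀ a ∈ lo ++ x :: hi, 0 < a := by
      intro a ha
      apply hpos
      simp at ha ⊢; tauto
    have := le_length_srwAux 0 lo hi u x (List.pairwise_cons.2 ⟨this, hs⟩)
    simp only [List.length_append, List.length_reverse]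
    exact this

theorem arrange_unique {lo hi lo' hi' : List ℕ} {x : ℕ} (h : (lo ++ x :: hi).Pairwise (· < ·))
    (h' : (lo' ++ x :: hi').Pairwise (· < ·))
    (hp : (lo ++ hi.reverse).Perm (lo' ++ hi'.reverse)) : lo = lo' ∧ hi = hi' := by
  have aux : ∀ l h : List ℕ, (l ++ h.reverse).Perm (l ++ h) := fun l h =>
    List.Perm.append_left l (List.reverse_perm h)
  have e : lo ++ x :: hi = lo' ++ x :: hi' := by
    have : (lo ++ x :: hi).Perm (lo' ++ x :: hi') :=
      List.perm_middle.trans ((((aux _ _).symm.trans (hp.trans (aux _ _))).cons x).trans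
        List.perm_middle.symm)
    exact this.eq_of_pairwise (fun a b _ _ h1 h2 => absurd h1 (by omega)) h h'
  have h1 : x ∉ lo := fun hx =>
    absurd ((List.pairwise_append.1 h).2.2 x hx x (by simp)) (lt_irrefl x)
  have h2 : x ∉ hi := fun hx =>
    absurd ((List.pairwise_cons.1 (List.pairwise_append.1 h).2.1).1 x hx) (lt_irrefl x)
  obtain ⟨a, -, b⟩ := (List.append_cons_inj_of_notMem h1 h2).1 e
  exact ⟨a, b⟩

theorem rho_nodup {n m : ℕ} (f : Fin m ↪ Fin n) : (rho f).Nodup := by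
  rw [rho, List.nodup_ofFn]
  intro i j h
  exact f.injective (Fin.ext (by simpa using h))

theorem rho_le {n m : ℕ} (f : Fin m ↪ Fin n) : ∀ a ∈ rho f, 1 ≤ a ∧ a ≤ n := by
  intro a ha
  obtain ⟨i, rfl⟩ := List.mem_ofFn.1 ha
  have := (f i).2
  omega

theorem rho_injective {n m : ℕ} : Function.Injective (rho (n := n) (m := m)) := by
  intro f g h
  have := List.ofFn_injective h
  ext i
  simpa using congrFun this i

/-- The word `ρ` formed by the last `k + 1` letters of `σ`, as an injection. -/
def lastLetters {n k : ℕ} (hk : k + 1 ≤ n) (σ : Equiv.Perm (Fin n)) : Fin (k + 1) ↪ Fin n :=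
  ⟨fun j => σ ⟨n - (k + 1) + j, by have := j.2; omega⟩, fun i j h => by
    have := congrArg Fin.val (σ.injective h)
    simp at this
    exact Fin.ext (by omega)⟩

theorem rho_lastLetters {n k : ℕ} (hk : k + 1 ≤ n) (σ : Equiv.Perm (Fin n)) :
    rho (lastLetters hk σ) = (word σ).drop (n - (k + 1)) := by
  refine List.ext_getElem (by simp [rho, word]; omega) ?_
  intro i h1 h2
  simp [rho, word, lastLetters, -List.ofFn_succ]
  rfl

/-- When the first letters of `σ` are arranged around `x = ρ₁` as in `lt_length_srw_iff`, the
descents of `σ` before `ρ` are counted by the letters of `α₀` above `ρ₁`. -/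
theorem desPair_eq {n k : ℕ} {f : Fin (k + 1) ↪ Fin n} {σ : Equiv.Perm (Fin n)}
    {lo hi u : List ℕ} {x : ℕ} (hr : rho f = x :: u)
    (hw : word σ = lo ++ hi.reverse ++ x :: u) (hs : (lo ++ x :: hi).Pairwise (· < ·)) :
    desPair n f = des (word σ) := by
  have hnd := word_nodup σ
  obtain ⟨-, hxhi, hlo⟩ := List.pairwise_append.1 hs
  have hset : ((Finset.Icc 1 n).filter fun a => a ∉ rho f ∧ (rho f).headI < a) = hi.toFinset := by
    ext a
    have hm := mem_word σ a
    rw [hr, Finset.mem_filter, Finset.mem_Icc, ← hm, List.mem_toFinset, List.headI_cons]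
    constructor
    · rintro ⟨h1, h2, h3⟩
      rw [hw] at h1
      rcases List.mem_append.1 h1 with h1 | h1
      · rcases List.mem_append.1 h1 with h1 | h1
        · have := hlo a h1 x (by simp)
          omega
        · exact List.mem_reverse.1 h1
      · exact absurd h1 h2
    · intro h
      refine ⟨by rw [hw]; simp [h], ?_, (List.pairwise_cons.1 hxhi).1 a h⟩
      rw [hw] at hnd
      intro h'
      exact (List.nodup_append.1 hnd).2.2 a (by simp [h]) a h' rfl
  have hhi : hi.Nodup := by
    rw [hw] at hnd
    exact List.nodup_reverse.1 (List.nodup_append.1 (List.nodup_append.1 hnd).1).2.1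
  rw [desPair, hset, List.toFinset_card_of_nodup hhi, hr, hw, des_shape u hs, Nat.add_comm]

theorem card_pairs_eq_card_srw (n k i : ℕ) (hk : k + 1 ≤ n) :
    Nat.card {f : Fin (k + 1) ↪ Fin n // desPair n f = i} =
      Nat.card {σ : Equiv.Perm (Fin n) //
        des (word σ) = i ∧ n - k ≤ (srw (word σ)).length} := by
  -- the shape of `σ` when its special reverse wave has length at least `n - k`
  have shape : ∀ σ : Equiv.Perm (Fin n), n - k ≤ (srw (word σ)).length →
      ∃ lo hi x u, rho (lastLetters hk σ) = x :: u ∧ word σ = lo ++ hi.reverse ++ x :: u ∧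
        (lo ++ x :: hi).Pairwise (· < ·) := by
    intro σ hσ
    obtain ⟨x, u, hxu⟩ : ∃ x u, rho (lastLetters hk σ) = x :: u :=
      List.exists_cons_of_ne_nil (by simp [rho])
    have hw : word σ = (word σ).take (n - (k + 1)) ++ x :: u := by
      rw [← hxu, rho_lastLetters, List.take_append_drop]
    have hnd := word_nodup σ
    have hpos := word_pos σ
    have hlen := length_word σ
    generalize (word σ).take (n - (k + 1)) = p at hw
    rw [hw] at hσ hnd hpos
    have hp : p.length = n - (k + 1) := by
      have h1 := congrArg List.length hw
      have h2 := congrArg List.length hxu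
      simp [rho] at h1 h2
      omega
    obtain ⟨lo, hi, rfl, hs⟩ := (lt_length_srw_iff hnd hpos).1 (by omega)
    exact ⟨lo, hi, x, u, hxu, hw, hs⟩
  symm
  refine Nat.card_congr (Equiv.ofBijective
    (fun σ : {σ : Equiv.Perm (Fin n) // des (word σ) = i ∧ n - k ≤ (srw (word σ)).length} =>
      (⟨lastLetters hk σ.1, ?_⟩ : {f : Fin (k + 1) ↪ Fin n // desPair n f = i})) ⟨?_, ?_⟩)
  · obtain ⟨lo, hi, x, u, hr, hw, hs⟩ := shape σ.1 σ.2.2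
    rw [desPair_eq hr hw hs, σ.2.1]
  · rintro ⟨σ, hσ⟩ ⟨τ, hτ⟩ h
    have h : lastLetters hk σ = lastLetters hk τ := congrArg Subtype.val h
    obtain ⟨lo, hi, x, u, hr, hw, hs⟩ := shape σ hσ.2
    obtain ⟨lo', hi', x', u', hr', hw', hs'⟩ := shape τ hτ.2
    rw [h, hr'] at hr
    obtain ⟨rfl, rfl⟩ := List.cons.inj hr
    have hp := word_perm σ τ
    rw [hw, hw', List.perm_append_right_iff] at hp
    obtain ⟨rfl, rfl⟩ := arrange_unique hs hs' hp
    exact Subtype.ext (word_injective (hw.trans hw'.symm))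
  · rintro ⟨f, hf⟩
    obtain ⟨x, u, hxu⟩ : ∃ x u, rho f = x :: u := List.exists_cons_of_ne_nil (by simp [rho])
    have hxr : x ∈ rho f := by rw [hxu]; simp
    -- the letters of `α₀` below and above `x = ρ₁`, in increasing order
    let lo := ((Finset.Icc 1 n).filter fun a => a ∉ rho f ∧ a < x).sort (· ≤ ·)
    let hi := ((Finset.Icc 1 n).filter fun a => a ∉ rho f ∧ x < a).sort (· ≤ ·)
    have mlo : ∀ a, a ∈ lo ↔ (1 ≤ a ∧ a ≤ n) ∧ a ∉ rho f ∧ a < x := by simp [lo]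
    have mhi : ∀ a, a ∈ hi ↔ (1 ≤ a ∧ a ≤ n) ∧ a ∉ rho f ∧ x < a := by simp [hi]
    have slo : lo.Pairwise (· < ·) := (Finset.sortedLT_sort _).pairwise
    have shi : hi.Pairwise (· < ·) := (Finset.sortedLT_sort _).pairwise
    have hs : (lo ++ x :: hi).Pairwise (· < ·) := by
      refine List.pairwise_append.2
        ⟨slo, List.pairwise_cons.2 ⟨fun a ha => ((mhi a).1 ha).2.2, shi⟩, ?_⟩
      intro a ha b hb
      have h1 := ((mlo a).1 ha).2.2
      rcases List.mem_cons.1 hb with rfl | hb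
      · exact h1
      · exact h1.trans ((mhi b).1 hb).2.2
    have hmem : ∀ a, a ∈ lo ++ hi.reverse ++ rho f ↔ 1 ≤ a ∧ a ≤ n := by
      intro a
      rw [List.mem_append, List.mem_append, List.mem_reverse, mlo, mhi]
      have := rho_le f a
      constructor
      · tauto
      · intro h
        by_cases ha : a ∈ rho f
        · exact Or.inr ha
        · have : a ≠ x := fun e => ha (e ▸ hxr)
          rcases lt_or_gt_of_ne this with h' | h' <;> tauto
    have hnd : (lo ++ hi.reverse ++ rho f).Nodup := by
      refine List.nodup_append.2 ⟨?_, rho_nodup f, ?_⟩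
      · have h1 : (lo ++ hi).Pairwise (· < ·) :=
          hs.sublist ((List.append_sublist_append_left _).2 (by simp))
        exact (List.Perm.append_left lo (List.reverse_perm hi)).nodup_iff.2
          (h1.imp fun h => ne_of_lt h)
      · rintro a ha b hb rfl
        rw [List.mem_append, List.mem_reverse, mlo, mhi] at ha
        tauto
    obtain ⟨σ, hσ⟩ := exists_word hnd hmem
    have hlen : (lo ++ hi.reverse).length = n - (k + 1) := by
      have h1 := congrArg List.length hσ
      rw [length_word, List.length_append] at h1
      have h2 : (rho f).length = k + 1 := by simp [rho]
      omega
    have hlast : lastLetters hk σ = f := by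
      apply rho_injective
      rw [rho_lastLetters, hσ, ← hlen, List.drop_left]
    have hw : word σ = lo ++ hi.reverse ++ x :: u := by rw [hσ, hxu]
    refine ⟨⟨σ, ?_, ?_⟩, Subtype.ext hlast⟩
    · rw [← desPair_eq hxu hw hs, hf]
    · have h1 := word_nodup σ
      have h2 := word_pos σ
      rw [hw] at h1 h2 ⊢
      have := (lt_length_srw_iff h1 h2).2 ⟨lo, hi, rfl, hs⟩
      omega

end Paper

/-- for `i > 0` and `0 ≤ k ≤ n - 1`, the four sets have the same cardinality:
(1) pairs `(α₀, ρ)` with `des((α₀,ρ)) = i`; (2) `σ ∈ S_n` with `des σ = i` and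
`(srw σ).length ≥ n - k`; (3) `σ ∈ S_n` with `des σ = i` and `(sw σ).length ≥ n - k`;
(4) `σ ∈ S_n` with `lec σ = i` and rightmost hook of length at least `n - k`. -/
theorem Paper.statement16 (n k i : ℕ) (hi : 0 < i) (hk : k ≤ n - 1) :
    Nat.card {f : Fin (k + 1) ↪ Fin n // desPair n f = i} =
      Nat.card {σ : Equiv.Perm (Fin n) //
        des (word σ) = i ∧ n - k ≤ (srw (word σ)).length} ∧
    Nat.card {σ : Equiv.Perm (Fin n) //
        des (word σ) = i ∧ n - k ≤ (srw (word σ)).length} =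
      Nat.card {σ : Equiv.Perm (Fin n) //
        des (word σ) = i ∧ n - k ≤ (sw (word σ)).length} ∧
    Nat.card {σ : Equiv.Perm (Fin n) //
        des (word σ) = i ∧ n - k ≤ (sw (word σ)).length} =
      Nat.card {σ : Equiv.Perm (Fin n) //
        ∃ γ hs, IsHookFact (word σ) γ hs ∧ lecVal hs = i ∧
          n - k ≤ (hs.getLastD γ).length} := by
  have h₁ : Nat.card {f : Fin (k + 1) ↪ Fin n // desPair n f = i} =
      Nat.card {σ : Equiv.Perm (Fin n) //
        des (word σ) = i ∧ n - k ≤ (srw (word σ)).length} := by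
    rcases Nat.eq_zero_or_pos n with rfl | hn
    · -- for `n = 0` both sets are empty, the second one because `i ≠ 0`
      have : IsEmpty {f : Fin (k + 1) ↪ Fin 0 // desPair 0 f = i} := ⟨fun f => (f.1 0).elim0⟩
      have : IsEmpty {σ : Equiv.Perm (Fin 0) //
          des (word σ) = i ∧ 0 - k ≤ (srw (word σ)).length} :=
        ⟨fun σ => hi.ne (by simpa [word, des] using σ.2.1)⟩
      rw [Nat.card_of_isEmpty, Nat.card_of_isEmpty]
    · exact card_pairs_eq_card_srw n k i (by omega)
  have h₂ := card_srw_eq_card_sw n (n - k) i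
  exact ⟨h₁, h₂, h₂.symm.trans (card_srw_eq_card_hook n (n - k) i)⟩
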